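/- arXiv:2004.07395 — 6 statements merged into one kernel-verified Lean document; each statement's English description precedes it below -/
import Mathlib

section
/- Let η > 0 be the SNR and let 0 < g ≤ h ≤ H be channel gains, where H is the channel gain of the SIC user n to its serving base station, h is the channel gain of the non-SIC user m to the serving base station, and g is the channel gain of user m to the base station attaining its minimum OMA rate (so that γ_m = (1/2)log₂(1+gη)). Assume the SIC user's minimum rate requirement satisfies γ_n ≤ (1/2)log₂(1+Hη). Define α* = ((1+hη)/√(1+gη) − 1)/(hη). Then α* is an optimal solution of the power allocation problem: α* ∈ [0,1], log₂(1+α*Hη) ≥ γ_n, log₂((1+hη)/(1+α*hη)) ≥ (1/2)log₂(1+gη), and for every α ∈ [0,1] satisfying log₂(1+αHη) ≥ γ_n and log₂((1+hη)/(1+αhη)) ≥ (1/2)log₂(1+gη), it holds that log₂(1+αHη) + log₂((1+hη)/(1+αhη)) ≤ log₂(1+α*Hη) + log₂((1+hη)/(1+α*hη)). -/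
/-- Theorem 1 (optimal NOMA power allocation): with SNR `η > 0` and channel gains
`0 < g ≤ h ≤ H`, the coefficient `α* = ((1+hη)/√(1+gη) − 1)/(hη)` is feasible
(lies in `[0,1]`, meets the SIC user's minimum rate requirement `γn` and the
non-SIC user's minimum OMA rate requirement `(1/2)log₂(1+gη)`) and maximizes
the aggregate pair rate among all feasible coefficients. -/
theorem optimal_power_allocation
    (η g h H γn : ℝ) (hη : 0 < η) (hg : 0 < g) (hgh : g ≤ h) (hhH : h ≤ H)
    (hγn : γn ≤ (1 / 2) * Real.logb 2 (1 + H * η))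
    (αstar : ℝ)
    (hαstar : αstar = ((1 + h * η) / Real.sqrt (1 + g * η) - 1) / (h * η)) :
    0 ≤ αstar ∧ αstar ≤ 1 ∧
    Real.logb 2 (1 + αstar * H * η) ≥ γn ∧
    Real.logb 2 ((1 + h * η) / (1 + αstar * h * η)) ≥ (1 / 2) * Real.logb 2 (1 + g * η) ∧
    ∀ α : ℝ, 0 ≤ α → α ≤ 1 →
      Real.logb 2 (1 + α * H * η) ≥ γn →
      Real.logb 2 ((1 + h * η) / (1 + α * h * η)) ≥ (1 / 2) * Real.logb 2 (1 + g * η) →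
      Real.logb 2 (1 + α * H * η) + Real.logb 2 ((1 + h * η) / (1 + α * h * η)) ≤
        Real.logb 2 (1 + αstar * H * η) +
          Real.logb 2 ((1 + h * η) / (1 + αstar * h * η)) := by
  have half : ∀ x : ℝ, 0 < x → (1 / 2) * Real.logb 2 x = Real.logb 2 (Real.sqrt x) := by
    intro x hx
    rw [Real.sqrt_eq_rpow, Real.logb_rpow_eq_mul_logb_of_pos hx]
  have h2 : (1 : ℝ) < 2 := by norm_num
  have hh : 0 < h := lt_of_lt_of_le hg hgh
  have hH : 0 < H := lt_of_lt_of_le hh hhH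
  have hga : g * η ≤ h * η := mul_le_mul_of_nonneg_right hgh hη.le
  have hab : h * η ≤ H * η := mul_le_mul_of_nonneg_right hhH hη.le
  have hc0 : 0 < g * η := mul_pos hg hη
  rw [half _ (by linarith)] at hγn
  rw [half _ (by linarith)]
  simp only [mul_assoc] at *
  generalize h * η = a at *
  generalize H * η = b at *
  generalize g * η = c at *
  have ha : 0 < a := by linarith
  have hb : 0 < b := by linarith
  have hs2 : Real.sqrt (1 + c) ^ 2 = 1 + c := Real.sq_sqrt (by linarith)
  have hs1 : 1 ≤ Real.sqrt (1 + c) := Real.one_le_sqrt.mpr (by linarith)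
  have ht2 : Real.sqrt (1 + b) ^ 2 = 1 + b := Real.sq_sqrt (by linarith)
  have ht1 : 1 ≤ Real.sqrt (1 + b) := Real.one_le_sqrt.mpr (by linarith)
  have hr2 : Real.sqrt (1 + a) ^ 2 = 1 + a := Real.sq_sqrt (by linarith)
  have hr1 : 1 ≤ Real.sqrt (1 + a) := Real.one_le_sqrt.mpr (by linarith)
  have hsr : Real.sqrt (1 + c) ≤ Real.sqrt (1 + a) := Real.sqrt_le_sqrt (by linarith)
  have hrt : Real.sqrt (1 + a) ≤ Real.sqrt (1 + b) := Real.sqrt_le_sqrt (by linarith)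
  generalize Real.sqrt (1 + c) = s at *
  generalize Real.sqrt (1 + b) = t at *
  generalize Real.sqrt (1 + a) = r at *
  have hs0 : 0 < s := by linarith
  have key : 1 + αstar * a = (1 + a) / s := by
    rw [hαstar]; field_simp; ring
  have key2 : (1 + a) / (1 + αstar * a) = s := by
    rw [key]; field_simp
  have hr : r ≤ 1 + αstar * a := by
    rw [key, le_div_iff₀ hs0]; nlinarith
  have hA0 : 0 ≤ αstar := by
    by_contra hn
    push Not at hn
    nlinarith
  have hA1 : αstar ≤ 1 := by
    have : 1 + αstar * a ≤ 1 + a := by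
      rw [key]; exact div_le_self (by linarith) hs1
    by_contra hn
    push Not at hn
    nlinarith
  have hAr : 1 ≤ αstar * (r + 1) := by
    have hr1' : 0 < r - 1 := by nlinarith
    have ha' : a = (r - 1) * (r + 1) := by linarith
    rw [ha'] at hr
    by_contra hn
    push Not at hn
    nlinarith
  have hAt : 1 ≤ αstar * (t + 1) := by nlinarith
  have hT : t ≤ 1 + αstar * b := by
    have hb' : b = (t - 1) * (t + 1) := by linarith
    rw [hb']
    nlinarith
  refine ⟨hA0, hA1, ?_, ?_, ?_⟩
  · exact hγn.trans (Real.logb_le_logb_of_le h2 (by linarith) hT)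
  · rw [key2]
  · intro α h0 h1 _ hc
    have hp : 0 < 1 + α * a := by positivity
    have hpA : 0 < 1 + αstar * a := by positivity
    have hq : 0 < 1 + α * b := by positivity
    have hqA : 0 < 1 + αstar * b := by positivity
    have hle : s ≤ (1 + a) / (1 + α * a) :=
      (Real.logb_le_logb h2 hs0 (by positivity)).mp hc
    have hαle : α ≤ αstar := by
      have h3 : 1 + α * a ≤ 1 + αstar * a := by
        rw [key, le_div_iff₀ hs0]
        rw [le_div_iff₀ hp] at hle
        linarith
      by_contra hn
      push Not at hn
      nlinarith
    have ha1 : 0 < 1 + a := by linarith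
    rw [← Real.logb_mul hq.ne' (by positivity), ← Real.logb_mul hqA.ne' (by positivity)]
    apply Real.logb_le_logb_of_le h2 (by positivity)
    rw [← mul_div_assoc, ← mul_div_assoc, div_le_div_iff₀ hp hpA]
    have h4 : (1 + α * b) * (1 + αstar * a) ≤ (1 + αstar * b) * (1 + α * a) := by
      nlinarith [mul_nonneg (sub_nonneg.mpr hαle) (sub_nonneg.mpr hab)]
    have h5 := mul_le_mul_of_nonneg_right h4 ha1.le
    linarith
end

section
/- Let η > 0 and let 0 ≤ h ≤ H be real numbers. Then the function f(α) = log₂(1+αHη) + log₂((1+hη)/(1+αhη)) is monotone nondecreasing in α on the interval [0,1]. Moreover, if h < H then f is strictly increasing on [0,1]. -/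
/-- The aggregate pair rate `f(α) = log₂(1+αHη) + log₂((1+hη)/(1+αhη))` is
monotone nondecreasing in `α` on `[0,1]` when `0 ≤ h ≤ H` and `η > 0`, and
strictly increasing when moreover `h < H`. -/
theorem aggregate_rate_monotone
    (η h H : ℝ) (hη : 0 < η) (hh : 0 ≤ h) (hhH : h ≤ H) :
    MonotoneOn
      (fun α : ℝ =>
        Real.logb 2 (1 + α * H * η) + Real.logb 2 ((1 + h * η) / (1 + α * h * η)))
      (Set.Icc 0 1) ∧
    (h < H →
      StrictMonoOn
        (fun α : ℝ =>
          Real.logb 2 (1 + α * H * η) + Real.logb 2 ((1 + h * η) / (1 + α * h * η)))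
        (Set.Icc 0 1)) := by
  have hH : 0 ≤ H := hh.trans hhH
  have hη' : 0 ≤ η := hη.le
  have hc : 0 < 1 + h * η := by positivity
  have key : ∀ a : ℝ, 0 ≤ a →
      Real.logb 2 (1 + a * H * η) + Real.logb 2 ((1 + h * η) / (1 + a * h * η))
        = Real.logb 2 ((1 + a * H * η) * ((1 + h * η) / (1 + a * h * η))) := by
    intro a ha
    have h1 : 0 < 1 + a * H * η := by positivity
    have h2 : 0 < 1 + a * h * η := by positivity
    exact (Real.logb_mul h1.ne' (div_pos hc h2).ne').symm
  refine ⟨?_, ?_⟩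
  · intro a ha b hb hab
    have ha0 := ha.1
    have hb0 := hb.1
    simp only [key a ha0, key b hb0]
    have h1 : 0 < 1 + a * H * η := by positivity
    have h2 : 0 < 1 + a * h * η := by positivity
    have h3 : 0 < 1 + b * h * η := by positivity
    refine Real.logb_le_logb_of_le (by norm_num) (mul_pos h1 (div_pos hc h2)) ?_
    rw [← mul_div_assoc, ← mul_div_assoc, div_le_div_iff₀ h2 h3]
    have h4 : 0 ≤ (1 + h * η) * ((b - a) * (H - h) * η) :=
      mul_nonneg hc.le (mul_nonneg (mul_nonneg (by linarith) (by linarith)) hη')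
    linear_combination h4
  · intro hlt a ha b hb hab
    have ha0 := ha.1
    have hb0 := hb.1
    simp only [key a ha0, key b hb0]
    have h1 : 0 < 1 + a * H * η := by positivity
    have h2 : 0 < 1 + a * h * η := by positivity
    have h3 : 0 < 1 + b * h * η := by positivity
    refine Real.logb_lt_logb (by norm_num) (mul_pos h1 (div_pos hc h2)) ?_
    rw [← mul_div_assoc, ← mul_div_assoc, div_lt_div_iff₀ h2 h3]
    have h4 : 0 < (1 + h * η) * ((b - a) * (H - h) * η) :=
      mul_pos hc (mul_pos (mul_pos (by linarith) (by linarith)) hη)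
    linear_combination h4
end

section
/- Let η > 0 and let 0 < g ≤ h be real numbers. Then the power allocation coefficient α* = ((1+hη)/√(1+gη) − 1)/(hη) satisfies 0 ≤ α* ≤ 1. -/
/-- For SNR `η > 0` and channel gains `0 < g ≤ h`, the candidate optimal power
allocation coefficient `α* = ((1+hη)/√(1+gη) − 1)/(hη)` lies in `[0,1]`. -/
theorem alpha_star_mem_unit_interval
    (η g h : ℝ) (hη : 0 < η) (hg : 0 < g) (hgh : g ≤ h) :
    0 ≤ ((1 + h * η) / Real.sqrt (1 + g * η) - 1) / (h * η) ∧
    ((1 + h * η) / Real.sqrt (1 + g * η) - 1) / (h * η) ≤ 1 := by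
  have hgη : 0 < g * η := mul_pos hg hη
  have hle : g * η ≤ h * η := mul_le_mul_of_nonneg_right hgh hη.le
  have hhη : 0 < h * η := lt_of_lt_of_le hgη hle
  have h1 : 1 ≤ Real.sqrt (1 + g * η) := Real.one_le_sqrt.mpr (by linarith)
  have hs : 0 < Real.sqrt (1 + g * η) := by linarith
  have hsq : Real.sqrt (1 + g * η) * Real.sqrt (1 + g * η) = 1 + g * η :=
    Real.mul_self_sqrt (by linarith)
  constructor
  · apply div_nonneg _ hhη.le
    rw [sub_nonneg, le_div_iff₀ hs]
    nlinarith
  · rw [div_le_one hhη, sub_le_iff_le_add, div_le_iff₀ hs]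
    nlinarith
end

section
/- Let η > 0 and let 0 < g ≤ h ≤ H be real numbers, and set α* = ((1+hη)/√(1+gη) − 1)/(hη). Then log₂(1 + α*Hη) ≥ (1/2)log₂(1+Hη). Consequently, the SIC user with channel gain H served with coefficient α* achieves at least its OMA rate, and hence meets any minimum rate requirement γ_n ≤ (1/2)log₂(1+Hη). -/
/-- With `0 < g ≤ h ≤ H` and `η > 0`, at the coefficient
`α* = ((1+hη)/√(1+gη) − 1)/(hη)` the SIC user's rate is at least its OMA rate
`(1/2)log₂(1+Hη)`, hence it meets any minimum rate requirement
`γn ≤ (1/2)log₂(1+Hη)`. -/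
theorem SIC_rate_at_alpha_star
    (η g h H : ℝ) (hη : 0 < η) (hg : 0 < g) (hgh : g ≤ h) (hhH : h ≤ H)
    (αstar : ℝ)
    (hαstar : αstar = ((1 + h * η) / Real.sqrt (1 + g * η) - 1) / (h * η)) :
    Real.logb 2 (1 + αstar * H * η) ≥ (1 / 2) * Real.logb 2 (1 + H * η) ∧
    ∀ γn : ℝ, γn ≤ (1 / 2) * Real.logb 2 (1 + H * η) →
      Real.logb 2 (1 + αstar * H * η) ≥ γn := by
  have key : Real.logb 2 (1 + αstar * H * η) ≥ (1 / 2) * Real.logb 2 (1 + H * η) := by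
    have hh : 0 < h := lt_of_lt_of_le hg hgh
    have hgη : 0 < g * η := mul_pos hg hη
    have hhη : 0 < h * η := mul_pos hh hη
    have h1 : g * η ≤ h * η := mul_le_mul_of_nonneg_right hgh hη.le
    have h2 : h * η ≤ H * η := mul_le_mul_of_nonneg_right hhH hη.le
    have hst : Real.sqrt (1 + g * η) ≤ Real.sqrt (1 + h * η) := Real.sqrt_le_sqrt (by linarith)
    have htu : Real.sqrt (1 + h * η) ≤ Real.sqrt (1 + H * η) := Real.sqrt_le_sqrt (by linarith)
    have hs : 0 < Real.sqrt (1 + g * η) := Real.sqrt_pos.mpr (by linarith)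
    have ht2 : Real.sqrt (1 + h * η) ^ 2 = 1 + h * η := Real.sq_sqrt (by linarith)
    have hu2 : Real.sqrt (1 + H * η) ^ 2 = 1 + H * η := Real.sq_sqrt (by linarith)
    have hlog : (1 / 2) * Real.logb 2 (1 + H * η) = Real.logb 2 (Real.sqrt (1 + H * η)) := by
      rw [← hu2, Real.logb_pow, Real.sqrt_sq (Real.sqrt_nonneg _)]
      push_cast
      ring
    rw [hlog]
    have hα : αstar * (h * η) = (1 + h * η) / Real.sqrt (1 + g * η) - 1 := by
      rw [hαstar]
      exact div_mul_cancel₀ _ hhη.ne'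
    generalize Real.sqrt (1 + g * η) = s at *
    generalize Real.sqrt (1 + h * η) = t at *
    generalize Real.sqrt (1 + H * η) = u at *
    have ht1 : 1 < t := by nlinarith
    have h3 : t ≤ (1 + h * η) / s := by
      rw [le_div_iff₀ hs]
      nlinarith
    have h4 : 1 * (t - 1) ≤ αstar * (t + 1) * (t - 1) := by nlinarith
    have h5 : 1 ≤ αstar * (t + 1) := le_of_mul_le_mul_right h4 (by linarith)
    have hα0 : 0 < αstar := by
      by_contra hc
      nlinarith
    have h6 : 1 ≤ αstar * (u + 1) := by nlinarith
    have h7 : u ≤ 1 + αstar * H * η := by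
      have e : αstar * H * η = αstar * (u + 1) * (u - 1) := by
        have : H * η = (u + 1) * (u - 1) := by linarith
        rw [mul_assoc, this, mul_assoc]
      rw [e]
      nlinarith
    exact Real.logb_le_logb_of_le (by norm_num) (by linarith) h7
  exact ⟨key, fun γn hγ => le_trans hγ key⟩
end

section
/- Let η > 0 and 0 < g ≤ h ≤ H, let γ_n ≤ (1/2)log₂(1+Hη), and set α* = ((1+hη)/√(1+gη) − 1)/(hη). Then the aggregate pair rate at α* satisfies log₂(1+α*Hη) + log₂((1+hη)/(1+α*hη)) ≥ γ_n + (1/2)log₂(1+gη); that is, under the optimal power allocation both users' minimum OMA-based rate requirements are met simultaneously. -/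
/-- With `η > 0`, `0 < g ≤ h ≤ H`, and SIC minimum rate requirement
`γn ≤ (1/2)log₂(1+Hη)`, the aggregate pair rate at
`α* = ((1+hη)/√(1+gη) − 1)/(hη)` is at least `γn + (1/2)log₂(1+gη)`;
both minimum OMA-based rate requirements are met simultaneously. -/
theorem aggregate_rate_meets_requirements
    (η g h H γn : ℝ) (hη : 0 < η) (hg : 0 < g) (hgh : g ≤ h) (hhH : h ≤ H)
    (hγn : γn ≤ (1 / 2) * Real.logb 2 (1 + H * η))
    (αstar : ℝ)
    (hαstar : αstar = ((1 + h * η) / Real.sqrt (1 + g * η) - 1) / (h * η)) :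
    Real.logb 2 (1 + αstar * H * η) +
        Real.logb 2 ((1 + h * η) / (1 + αstar * h * η)) ≥
      γn + (1 / 2) * Real.logb 2 (1 + g * η) := by
  have hh : 0 < h := lt_of_lt_of_le hg hgh
  have hx : 0 < h * η := mul_pos hh hη
  have hgx : 0 < g * η := mul_pos hg hη
  have hgle : g * η ≤ h * η := mul_le_mul_of_nonneg_right hgh hη.le
  have hXle : h * η ≤ H * η := mul_le_mul_of_nonneg_right hhH hη.le
  have hs : 0 < Real.sqrt (1 + g * η) := Real.sqrt_pos.mpr (by linarith)
  have hst : Real.sqrt (1 + g * η) ≤ Real.sqrt (1 + h * η) := Real.sqrt_le_sqrt (by linarith)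
  have htT : Real.sqrt (1 + h * η) ≤ Real.sqrt (1 + H * η) := Real.sqrt_le_sqrt (by linarith)
  have ht2 : Real.sqrt (1 + h * η) ^ 2 = 1 + h * η := Real.sq_sqrt (by linarith)
  have hT2 : Real.sqrt (1 + H * η) ^ 2 = 1 + H * η := Real.sq_sqrt (by linarith)
  have ht1 : 1 < Real.sqrt (1 + h * η) := by
    rw [Real.lt_sqrt (by norm_num)]; linarith
  have hlog : ∀ y : ℝ, 0 ≤ y → Real.logb 2 (Real.sqrt y) = (1 / 2) * Real.logb 2 y := by
    intro y hy
    rw [Real.logb, Real.logb, Real.log_sqrt hy]; ring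
  have hα : αstar * (h * η) = (1 + h * η) / Real.sqrt (1 + g * η) - 1 := by
    rw [hαstar, div_mul_cancel₀ _ hx.ne']
  have e2 : (1 + h * η) / (1 + αstar * h * η) = Real.sqrt (1 + g * η) := by
    have : 1 + αstar * h * η = (1 + h * η) / Real.sqrt (1 + g * η) := by
      rw [mul_assoc, hα]; ring
    rw [this, div_div_cancel₀ (by linarith)]
  rw [e2, hlog _ (by linarith)]
  have hge : Real.sqrt (1 + h * η) ≤ (1 + h * η) / Real.sqrt (1 + g * η) := by
    rw [le_div_iff₀ hs]
    nlinarith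
  generalize Real.sqrt (1 + h * η) = t at *
  have k1 : 1 ≤ αstar * (t + 1) := by
    have h3 : (t - 1) * 1 ≤ (t - 1) * (αstar * (t + 1)) := by
      have : (t - 1) * (αstar * (t + 1)) = αstar * (h * η) := by
        have : h * η = t ^ 2 - 1 := by linarith
        rw [this]; ring
      rw [this]; linarith
    exact le_of_mul_le_mul_left h3 (by linarith)
  have hα0 : 0 < αstar := by
    by_contra hc
    nlinarith
  have key : Real.sqrt (1 + H * η) ≤ 1 + αstar * H * η := by
    generalize Real.sqrt (1 + H * η) = T at *
    have k2 : 1 ≤ αstar * (T + 1) := by nlinarith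
    have : αstar * H * η = (T - 1) * (αstar * (T + 1)) := by
      have : H * η = T ^ 2 - 1 := by linarith
      rw [mul_assoc, this]; ring
    rw [this]
    nlinarith
  have hl := Real.logb_le_logb_of_le (b := 2) (by norm_num)
    (Real.sqrt_pos.mpr (by linarith : 0 < 1 + H * η)) key
  rw [hlog _ (by linarith)] at hl
  linarith
end

section
/- Let η > 0 and 0 < h ≤ H, and set α* = (√(1+hη) − 1)/(hη). Then log₂(1+α*Hη) + log₂((1+hη)/(1+α*hη)) ≥ (1/2)log₂(1+Hη) + (1/2)log₂(1+hη); that is, when each user's minimum rate requirement is its OMA rate to the serving base station, NOMA with the optimal power allocation coefficient achieves an aggregate pair rate at least as large as the OMA aggregate rate of the two users. -/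
/-- With `η > 0` and `0 < h ≤ H`, NOMA with the optimal coefficient
`α* = (√(1+hη) − 1)/(hη)` achieves an aggregate pair rate at least as large as
the OMA aggregate rate `(1/2)log₂(1+Hη) + (1/2)log₂(1+hη)`. -/
theorem NOMA_beats_OMA
    (η h H : ℝ) (hη : 0 < η) (hh : 0 < h) (hhH : h ≤ H)
    (αstar : ℝ)
    (hαstar : αstar = (Real.sqrt (1 + h * η) - 1) / (h * η)) :
    Real.logb 2 (1 + αstar * H * η) +
        Real.logb 2 ((1 + h * η) / (1 + αstar * h * η)) ≥
      (1 / 2) * Real.logb 2 (1 + H * η) + (1 / 2) * Real.logb 2 (1 + h * η) := by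
  have hx : 0 < h * η := mul_pos hh hη
  have hxy : h * η ≤ H * η := mul_le_mul_of_nonneg_right hhH hη.le
  obtain ⟨s, hs⟩ : ∃ s, s = Real.sqrt (1 + h * η) := ⟨_, rfl⟩
  obtain ⟨t, ht⟩ : ∃ t, t = Real.sqrt (1 + H * η) := ⟨_, rfl⟩
  have hs2 : s ^ 2 = 1 + h * η := by rw [hs]; exact Real.sq_sqrt (by linarith)
  have ht2 : t ^ 2 = 1 + H * η := by rw [ht]; exact Real.sq_sqrt (by linarith)
  have hst : s ≤ t := by rw [hs, ht]; exact Real.sqrt_le_sqrt (by linarith)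
  have hs0 : 0 ≤ s := by rw [hs]; exact Real.sqrt_nonneg _
  have hs1 : 1 < s := by nlinarith
  rw [← hs] at hαstar
  have hax : αstar * (h * η) = s - 1 := by rw [hαstar]; field_simp
  have ha : αstar * (s + 1) = 1 := by
    have h1 : (s - 1) * (αstar * (s + 1)) = (s - 1) * 1 := by
      have : h * η = s ^ 2 - 1 := by linarith
      rw [this] at hax
      linarith
    exact mul_left_cancel₀ (by linarith) h1
  have ha0 : 0 < αstar := by
    by_contra hc
    nlinarith
  have e1 : 1 + αstar * h * η = s := by linarith
  have key : t ≤ 1 + αstar * H * η := by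
    have e : αstar * H * η = αstar * (t ^ 2 - 1) := by rw [ht2]; ring
    have h3 : 0 ≤ αstar * ((t - 1) * (t - s)) :=
      mul_nonneg ha0.le (mul_nonneg (by linarith) (by linarith))
    have h4 : αstar * (t ^ 2 - 1) - (t - 1) * (αstar * (s + 1))
        = αstar * ((t - 1) * (t - s)) := by ring
    rw [ha] at h4
    linarith
  have e2 : s ^ 2 / s = s := by field_simp
  have hl := Real.logb_le_logb_of_le (b := 2) (by norm_num) (by linarith : 0 < t) key
  rw [e1, ← hs2, ← ht2, e2, Real.logb_pow, Real.logb_pow]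
  push_cast
  linarith
end
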